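/- Assume π(x) = li(x) + O(x/log³ x). Then ∑_{2 ≤ n ≤ x} 1/π(n) − ∑_{3 ≤ n ≤ x} 1/li(n) converges to a finite limit as x → ∞, i.e. the difference equals a constant plus o(1). -/

import Mathlib

open Filter Real

noncomputable def li (x : ℝ) : ℝ := ∫ t in (2:ℝ)..x, 1 / Real.log t

noncomputable def primePi (x : ℝ) : ℝ := Nat.primeCounting ⌊x⌋₊

open MeasureTheory Asymptotics Topology Set
open scoped ArithmeticFunction.vonMangoldt

/-!
Comparing `1 / π(n) - 1 / li(n)` with `(li(n) - π(n)) log² n / n²`, and `π - li` with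
`(ψ(t) - ⌊t⌋) / log t`, the difference of the two sums is `-∫ (ψ(t) - ⌊t⌋) log t / t² dt` up to an
absolutely convergent integral. The assumption only bounds this integrand by a multiple of
`1 / (t log t)`, so its convergence rests on cancellation. The damped integral
`∫ (ψ(t) - ⌊t⌋) log t / t² · t ^ (-ε) dt` is minus the derivative of `(-ζ′(s) / ζ(s) - ζ(s)) / s`
at `s = 1 + ε`; the poles of `-ζ′ / ζ` and `ζ` at `1` cancel, so it has a limit as `ε → 0⁺`.
Littlewood's Tauberian theorem, whose condition is exactly the bound `O(1 / (t log t))`, then gives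
convergence at `ε = 0`.
-/

section Tauberian

open Polynomial

lemma exists_polynomial_integral_abs_sub_le {μ : Measure ℝ} [IsFiniteMeasure μ] {a b : ℝ}
    (hμ : ∀ᵐ y ∂μ, y ∈ Icc a b) {q : ℝ → ℝ} (hq : Integrable q μ) {η : ℝ} (hη : 0 < η) :
    ∃ Q : ℝ[X], Integrable (fun y ↦ |q y - Q.eval y|) μ ∧ ∫ y, |q y - Q.eval y| ∂μ ≤ η := by
  obtain ⟨g, -, hqg, hgc, hg⟩ := hq.exists_hasCompactSupport_integral_sub_le (half_pos hη)
  set δ := η / 2 / (μ.real univ + 1)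
  obtain ⟨Q, hQ⟩ := exists_polynomial_near_of_continuousOn a b g hgc.continuousOn δ (by positivity)
  have hgQ : ∀ᵐ y ∂μ, ‖g y - Q.eval y‖ ≤ δ := by
    filter_upwards [hμ] with y hy
    rw [norm_sub_rev]
    exact (hQ y hy).le
  have hgQi : Integrable (fun y ↦ g y - Q.eval y) μ :=
    .of_bound (hgc.sub Q.continuous).aestronglyMeasurable δ hgQ
  have hqQi : Integrable (fun y ↦ |q y - Q.eval y|) μ := by
    simpa using ((hq.sub hg).add hgQi).abs
  have hqgi : Integrable (fun y ↦ ‖q y - g y‖) μ := (hq.sub hg).norm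
  refine ⟨Q, hqQi, ?_⟩
  calc ∫ y, |q y - Q.eval y| ∂μ ≤ ∫ y, (‖q y - g y‖ + δ) ∂μ := by
        refine integral_mono_ae hqQi (hqgi.add (integrable_const δ)) ?_
        filter_upwards [hgQ] with y hy
        exact (abs_sub_le _ (g y) _).trans (add_le_add_right hy _)
    _ = (∫ y, ‖q y - g y‖ ∂μ) + δ * μ.real univ := by
        rw [integral_add hqgi (integrable_const δ), integral_const, smul_eq_mul,
          mul_comm]
    _ ≤ η / 2 + η / 2 := by
        gcongr
        rw [div_mul_comm]
        exact mul_le_of_le_one_left (by positivity)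
          (div_le_one_of_le₀ (by linarith) (by positivity))
    _ = η := add_halves η

lemma rpow_neg_mem_Ioo_iff {ε t : ℝ} (hε : 0 < ε) (ht : 0 < t) :
    t ^ (-ε) ∈ Ioo (0 : ℝ) 1 ↔ t ∈ Ioi 1 := by
  rw [mem_Ioo, mem_Ioi, rpow_lt_one_iff_of_pos ht]
  constructor
  · rintro ⟨-, h | h⟩ <;> linarith
  · exact fun h ↦ ⟨by positivity, Or.inl ⟨h, by linarith⟩⟩

section ChangeOfVariables

variable {E : Type*} [NormedAddCommGroup E] [NormedSpace ℝ E] {ε : ℝ}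

lemma indicator_comp_rpow_neg (hε : 0 < ε) (r : ℝ → E) {t : ℝ} (ht : t ∈ Ioi (0 : ℝ)) :
    (|-ε| * t ^ (-ε - 1)) • (Ioo 0 1).indicator r (t ^ (-ε)) =
      (Ioi 1).indicator (fun t ↦ (ε * t ^ (-ε - 1)) • r (t ^ (-ε))) t := by
  rw [abs_neg, abs_of_pos hε]
  simp only [indicator_apply, rpow_neg_mem_Ioo_iff hε ht, smul_ite, smul_zero]

lemma integrableOn_comp_rpow_neg_Ioi_one_iff (hε : 0 < ε) (r : ℝ → E) :
    IntegrableOn (fun t ↦ (ε * t ^ (-ε - 1)) • r (t ^ (-ε))) (Ioi 1) ↔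
      IntegrableOn r (Ioo 0 1) := by
  have h := integrableOn_Ioi_comp_rpow_iff ((Ioo 0 1).indicator r) (neg_ne_zero.mpr hε.ne')
  rwa [integrableOn_congr_fun (fun t ht ↦ indicator_comp_rpow_neg hε r ht) measurableSet_Ioi,
    integrableOn_indicator_iff measurableSet_Ioi, integrableOn_indicator_iff measurableSet_Ioo,
    inter_eq_self_of_subset_left Ioo_subset_Ioi_self,
    inter_eq_self_of_subset_left (Ioi_subset_Ioi zero_le_one)] at h

lemma integral_comp_rpow_neg_Ioi_one (hε : 0 < ε) (r : ℝ → E) :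
    ∫ t in Ioi (1 : ℝ), (ε * t ^ (-ε - 1)) • r (t ^ (-ε)) = ∫ y in Ioo (0 : ℝ) 1, r y := by
  have h := integral_comp_rpow_Ioi ((Ioo 0 1).indicator r) (neg_ne_zero.mpr hε.ne')
  rwa [setIntegral_congr_fun measurableSet_Ioi fun t ht ↦ indicator_comp_rpow_neg hε r ht,
    setIntegral_indicator measurableSet_Ioi, setIntegral_indicator measurableSet_Ioo,
    inter_eq_self_of_subset_right Ioo_subset_Ioi_self,
    inter_eq_self_of_subset_right (Ioi_subset_Ioi zero_le_one)] at h

end ChangeOfVariables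

/-- Karamata's function on `(0, 1)`: writing the indicator of `[1/e, 1)` as `y (1 + (1 - y) q(y))`
defines `q = karamataQuotient`, so that approximating `q` by polynomials approximates the indicator
by polynomials that agree with it at both endpoints. -/
noncomputable def karamataQuotient (y : ℝ) : ℝ := if exp (-1) ≤ y then y⁻¹ else -(1 - y)⁻¹

lemma mul_one_add_mul_karamataQuotient (y : ℝ) :
    y * (1 + (1 - y) * karamataQuotient y) = if exp (-1) ≤ y then 1 else 0 := by
  unfold karamataQuotient
  split_ifs with hy
  · have : y ≠ 0 := ((exp_pos _).trans_le hy).ne'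
    field_simp
    ring
  · have : 1 - y ≠ 0 := by linarith [exp_lt_one_iff.mpr neg_one_lt_zero]
    field_simp
    ring

lemma integrableOn_karamataQuotient : IntegrableOn karamataQuotient (Ioo 0 1) := by
  have he : exp (-1) < 1 := exp_lt_one_iff.mpr neg_one_lt_zero
  have hright : IntegrableOn karamataQuotient (Icc (exp (-1)) 1) :=
    (ContinuousOn.integrableOn_Icc (continuousOn_id.inv₀
      fun y hy ↦ ((exp_pos _).trans_le hy.1).ne')).congr_fun
      (fun y hy ↦ (if_pos hy.1).symm) measurableSet_Icc
  have hleft : IntegrableOn karamataQuotient (Ico 0 (exp (-1))) := by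
    refine IntegrableOn.congr_fun (f := fun y ↦ -(1 - y)⁻¹) ?_
      (fun y hy ↦ (if_neg hy.2.not_ge).symm) measurableSet_Ico
    refine (ContinuousOn.integrableOn_Icc ?_).mono_set Ico_subset_Icc_self
    exact ((continuousOn_const.sub continuousOn_id).inv₀
      fun y hy ↦ (sub_pos.mpr (hy.2.trans_lt he)).ne').neg
  refine (hleft.union hright).mono_set ?_
  rw [Ico_union_Icc_eq_Icc (exp_pos _).le he.le]
  exact Ioo_subset_Icc_self

section KaramataMethod

variable {h : ℝ → ℝ} {C L T : ℝ}

lemma rpow_mul_eval_monomial_rpow (n : ℕ) (a : ℝ) {t : ℝ} (ht : 0 ≤ t) (ε : ℝ) :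
    t ^ ε * (monomial n a).eval (t ^ ε) = a * t ^ ((n + 1 : ℝ) * ε) := by
  have hpow : t ^ ((n + 1 : ℝ) * ε) = (t ^ ε) ^ (n + 1) := by
    rw [← rpow_natCast, ← rpow_mul ht]
    push_cast
    ring_nf
  rw [eval_monomial, hpow]
  ring

lemma integrableOn_mul_rpow_neg_mul_eval
    (hint : ∀ ε : ℝ, 0 < ε → IntegrableOn (fun t ↦ h t * t ^ (-ε)) (Ioi 1)) (R : ℝ[X])
    {ε : ℝ} (hε : 0 < ε) :
    IntegrableOn (fun t ↦ h t * (t ^ (-ε) * R.eval (t ^ (-ε)))) (Ioi 1) := by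
  induction R using Polynomial.induction_on' with
  | add p q hp hq =>
    simp only [eval_add, mul_add]
    exact hp.add hq
  | monomial n a =>
    refine IntegrableOn.congr_fun (Integrable.const_mul (hint ((n + 1) * ε) (by positivity)) a)
      (fun t ht ↦ ?_) measurableSet_Ioi
    have ht₀ : 0 ≤ t := zero_le_one.trans (le_of_lt ht)
    simp only [rpow_mul_eval_monomial_rpow n a ht₀, mul_neg]
    ring

lemma tendsto_integral_mul_rpow_neg_mul_eval
    (hint : ∀ ε : ℝ, 0 < ε → IntegrableOn (fun t ↦ h t * t ^ (-ε)) (Ioi 1))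
    (hlim : Tendsto (fun ε : ℝ ↦ ∫ t in Ioi 1, h t * t ^ (-ε)) (𝓝[>] 0) (𝓝 L)) (R : ℝ[X]) :
    Tendsto (fun ε : ℝ ↦ ∫ t in Ioi 1, h t * (t ^ (-ε) * R.eval (t ^ (-ε)))) (𝓝[>] 0)
      (𝓝 (R.eval 1 * L)) := by
  induction R using Polynomial.induction_on' with
  | add p q hp hq =>
    rw [eval_add, add_mul]
    refine (hp.add hq).congr' ?_
    filter_upwards [self_mem_nhdsWithin] with ε hε
    rw [← integral_add (integrableOn_mul_rpow_neg_mul_eval hint p hε)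
      (integrableOn_mul_rpow_neg_mul_eval hint q hε)]
    simp only [eval_add, mul_add]
  | monomial n a =>
    have hscale : Tendsto (fun ε : ℝ ↦ (n + 1 : ℝ) * ε) (𝓝[>] 0) (𝓝[>] 0) := by
      refine tendsto_nhdsWithin_iff.mpr ⟨?_, ?_⟩
      · exact ((continuous_const_mul (n + 1 : ℝ)).tendsto' 0 0 (mul_zero _)).mono_left
          nhdsWithin_le_nhds
      · filter_upwards [self_mem_nhdsWithin] with ε hε
        exact mul_pos n.cast_add_one_pos (mem_Ioi.mp hε)
    rw [eval_monomial, one_pow, mul_one]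
    refine ((hlim.comp hscale).const_mul a).congr fun ε ↦ ?_
    rw [Function.comp_apply, ← integral_const_mul]
    refine setIntegral_congr_fun measurableSet_Ioi fun t ht ↦ ?_
    have ht₀ : 0 ≤ t := zero_le_one.trans (le_of_lt ht)
    simp only [rpow_mul_eval_monomial_rpow n a ht₀, mul_neg]
    ring

lemma exp_neg_one_le_rpow_neg_inv_log_iff (hT : 1 < T) {t : ℝ} (ht : 0 < t) :
    exp (-1) ≤ t ^ (-(log T)⁻¹) ↔ t ≤ T := by
  rw [rpow_def_of_pos ht, exp_le_exp, mul_neg, neg_le_neg_iff, ← div_eq_mul_inv,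
    div_le_one (log_pos hT), log_le_log_iff ht (zero_lt_one.trans hT)]

lemma one_sub_rpow_neg_le (ε : ℝ) {t : ℝ} (ht : 0 < t) : 1 - t ^ (-ε) ≤ ε * log t := by
  rw [rpow_def_of_pos ht]
  linarith [add_one_le_exp (log t * -ε)]

lemma abs_indicator_sub_mul_eval_le (hT : 1 < T) (Q : ℝ[X]) {ε t : ℝ} (hε : ε = (log T)⁻¹)
    (ht : 1 < t) (hbound : |h t| ≤ C / (t * log t)) :
    |(Ioc 1 T).indicator h t - h t * (t ^ (-ε) * (1 + (1 - X) * Q).eval (t ^ (-ε)))| ≤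
      C * (ε * t ^ (-ε - 1) * |karamataQuotient (t ^ (-ε)) - Q.eval (t ^ (-ε))|) := by
  have ht₀ : 0 < t := zero_lt_one.trans ht
  have hε₀ : 0 < ε := hε ▸ inv_pos.mpr (log_pos hT)
  have hlog : 0 < log t := log_pos ht
  have hind : (Ioc 1 T).indicator h t =
      h t * (t ^ (-ε) * (1 + (1 - t ^ (-ε)) * karamataQuotient (t ^ (-ε)))) := by
    simp [mul_one_add_mul_karamataQuotient, hε, exp_neg_one_le_rpow_neg_inv_log_iff hT ht₀,
      indicator_apply, ht]
  set y := t ^ (-ε) with hy_def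
  obtain ⟨hy₀, hy₁⟩ : y ∈ Ioo (0 : ℝ) 1 := (rpow_neg_mem_Ioo_iff hε₀ ht₀).mpr ht
  calc |(Ioc 1 T).indicator h t - h t * (y * (1 + (1 - X) * Q).eval y)|
      = |h t * (y * (1 - y) * (karamataQuotient y - Q.eval y))| := by
        rw [hind]
        simp only [eval_add, eval_one, eval_mul, eval_sub, eval_X]
        ring_nf
    _ = |h t| * (y * (1 - y) * |karamataQuotient y - Q.eval y|) := by
        rw [abs_mul, abs_mul, abs_of_pos (mul_pos hy₀ (sub_pos.mpr hy₁))]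
    _ ≤ C / (t * log t) * (y * (ε * log t) * |karamataQuotient y - Q.eval y|) := by
        gcongr
        · exact (abs_nonneg _).trans hbound
        · exact one_sub_rpow_neg_le ε ht₀
    _ = C * (ε * t ^ (-ε - 1) * |karamataQuotient y - Q.eval y|) := by
        rw [rpow_sub_one ht₀.ne', ← hy_def]
        field_simp

lemma integrableOn_Ioc_of_integrableOn_mul_rpow_neg {ε : ℝ}
    (hint : IntegrableOn (fun t ↦ h t * t ^ (-ε)) (Ioi 1)) : IntegrableOn h (Ioc 1 T) := by
  have hpos : ∀ t ∈ Icc 1 T, (0 : ℝ) < t := fun t ht ↦ zero_lt_one.trans_le ht.1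
  have hcont : ContinuousOn (fun t : ℝ ↦ t ^ ε) (Icc 1 T) :=
    continuousOn_id.rpow_const fun t ht ↦ Or.inl (hpos t ht).ne'
  have hIcc : IntegrableOn (fun t ↦ h t * t ^ (-ε)) (Icc 1 T) :=
    (integrableOn_Icc_iff_integrableOn_Ioc (by simp)).mpr (hint.mono_set Ioc_subset_Ioi_self)
  refine ((hIcc.mul_continuousOn hcont isCompact_Icc).congr_fun (fun t ht ↦ ?_)
    measurableSet_Icc).mono_set Ioc_subset_Icc_self
  simp only [mul_assoc, ← rpow_add (hpos t ht), neg_add_cancel, rpow_zero, mul_one]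

lemma abs_integral_sub_integral_mul_eval_le
    (hint : ∀ ε : ℝ, 0 < ε → IntegrableOn (fun t ↦ h t * t ^ (-ε)) (Ioi 1))
    (hbound : ∀ t > 1, |h t| ≤ C / (t * log t)) {Q : ℝ[X]}
    (hQ : IntegrableOn (fun y ↦ |karamataQuotient y - Q.eval y|) (Ioo 0 1)) (hT : 1 < T)
    {ε : ℝ} (hε : ε = (log T)⁻¹) :
    |(∫ t in Ioc 1 T, h t) -
        ∫ t in Ioi 1, h t * (t ^ (-ε) * (1 + (1 - X) * Q).eval (t ^ (-ε)))| ≤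
      C * ∫ y in Ioo (0 : ℝ) 1, |karamataQuotient y - Q.eval y| := by
  have hε₀ : 0 < ε := hε ▸ inv_pos.mpr (log_pos hT)
  have hh : IntegrableOn ((Ioc 1 T).indicator h) (Ioi 1) :=
    ((integrableOn_Ioc_of_integrableOn_mul_rpow_neg (hint ε hε₀)).integrable_indicator
      measurableSet_Ioc).integrableOn
  have hind : ∫ t in Ioc 1 T, h t = ∫ t in Ioi 1, (Ioc 1 T).indicator h t := by
    rw [setIntegral_indicator measurableSet_Ioc,
      inter_eq_self_of_subset_right Ioc_subset_Ioi_self]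
  have hdom := (integrableOn_comp_rpow_neg_Ioi_one_iff hε₀
    fun y ↦ |karamataQuotient y - Q.eval y|).mpr hQ
  rw [hind, ← integral_sub hh (integrableOn_mul_rpow_neg_mul_eval hint _ hε₀),
    ← integral_comp_rpow_neg_Ioi_one hε₀ fun y ↦ |karamataQuotient y - Q.eval y|,
    ← integral_const_mul, ← norm_eq_abs]
  refine norm_integral_le_of_norm_le (Integrable.const_mul hdom C) ?_
  exact ae_restrict_of_forall_mem measurableSet_Ioi fun t ht ↦
    abs_indicator_sub_mul_eval_le hT Q hε ht (hbound t ht)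

/-- Littlewood's Tauberian theorem, with `t = e ^ u` in place of the variable `u` of the Laplace
transform. -/
theorem tendsto_integral_of_tendsto_integral_mul_rpow_neg
    (hint : ∀ ε : ℝ, 0 < ε → IntegrableOn (fun t ↦ h t * t ^ (-ε)) (Ioi 1))
    (hbound : ∀ t > 1, |h t| ≤ C / (t * log t))
    (hlim : Tendsto (fun ε : ℝ ↦ ∫ t in Ioi 1, h t * t ^ (-ε)) (𝓝[>] 0) (𝓝 L)) :
    Tendsto (fun T : ℝ ↦ ∫ t in Ioc 1 T, h t) atTop (𝓝 L) := by
  have hC : 0 ≤ C := by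
    have he := (abs_nonneg _).trans (hbound (exp 1) (one_lt_exp_iff.mpr one_pos))
    rwa [log_exp, mul_one, le_div_iff₀ (exp_pos 1), zero_mul] at he
  have hIoo : ∀ᵐ y ∂volume.restrict (Ioo (0 : ℝ) 1), y ∈ Icc (0 : ℝ) 1 :=
    ae_restrict_of_forall_mem measurableSet_Ioo fun y hy ↦ Ioo_subset_Icc_self hy
  refine Metric.tendsto_nhds.mpr fun δ hδ ↦ ?_
  obtain ⟨Q, hQ, hQδ⟩ := exists_polynomial_integral_abs_sub_le hIoo integrableOn_karamataQuotient
    (η := δ / (2 * (C + 1))) (by positivity)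
  have hpoly := tendsto_integral_mul_rpow_neg_mul_eval hint hlim (1 + (1 - X) * Q)
  rw [show (1 + (1 - X) * Q : ℝ[X]).eval 1 = 1 by simp, one_mul] at hpoly
  have hε : Tendsto (fun T : ℝ ↦ (log T)⁻¹) atTop (𝓝[>] 0) :=
    tendsto_inv_atTop_nhdsGT_zero.comp tendsto_log_atTop
  filter_upwards [hε.eventually (Metric.tendsto_nhds.mp hpoly (δ / 2) (half_pos hδ)),
    eventually_gt_atTop 1] with T hnear hT
  have hδ_le : C * (δ / (2 * (C + 1))) ≤ δ / 2 := by
    rw [← mul_div_assoc, div_le_div_iff₀ (by positivity) (by positivity)]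
    nlinarith
  have happrox := (abs_integral_sub_integral_mul_eval_le hint hbound hQ hT rfl).trans
    ((mul_le_mul_of_nonneg_left hQδ hC).trans hδ_le)
  calc dist (∫ t in Ioc 1 T, h t) L ≤ _ + _ := dist_triangle _ _ _
    _ < δ / 2 + δ / 2 := add_lt_add_of_le_of_lt happrox hnear
    _ = δ := add_halves δ

end KaramataMethod

end Tauberian

section LogPowers

lemma isBigO_div_log_pow_of_le {m n : ℕ} (h : m ≤ n) :
    (fun t : ℝ ↦ t / log t ^ n) =O[atTop] fun t ↦ t / log t ^ m := by
  refine IsBigO.of_bound' ?_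
  filter_upwards [eventually_ge_atTop 1, tendsto_log_atTop.eventually_ge_atTop 1] with t ht hl
  rw [norm_of_nonneg (by positivity), norm_of_nonneg (by positivity)]
  gcongr

lemma isBigO_rpow_div_log_pow {r : ℝ} (hr : r < 1) (n : ℕ) :
    (fun t : ℝ ↦ t ^ r) =O[atTop] fun t ↦ t / log t ^ n := by
  have hlog : (fun t : ℝ ↦ log t ^ n) =O[atTop] fun t ↦ t ^ (1 - r) := by
    simpa only [rpow_natCast] using
      (isLittleO_log_rpow_rpow_atTop (n : ℝ) (sub_pos.mpr hr)).isBigO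
  refine ((isBigO_refl (fun t : ℝ ↦ t ^ r / log t ^ n) atTop).mul hlog).congr' ?_ ?_
  · filter_upwards [eventually_gt_atTop 1] with t ht
    have := log_pos ht
    field_simp
  · filter_upwards [eventually_gt_atTop 0] with t ht
    rw [div_mul_eq_mul_div, ← rpow_add ht, add_sub_cancel, rpow_one]

lemma isBigO_const_div_log_pow (c : ℝ) (n : ℕ) :
    (fun _ : ℝ ↦ c) =O[atTop] fun t ↦ t / log t ^ n :=
  (isBigO_const_const c one_ne_zero atTop).trans
    (by simpa using isBigO_rpow_div_log_pow zero_lt_one n)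

lemma hasDerivAt_div_log_pow (n : ℕ) {x : ℝ} (hx : 1 < x) :
    HasDerivAt (fun t ↦ t / log t ^ n) (1 / log x ^ n - n / log x ^ (n + 1)) x := by
  have hx₀ : x ≠ 0 := (zero_lt_one.trans hx).ne'
  have hlog : log x ≠ 0 := (log_pos hx).ne'
  refine ((hasDerivAt_id x).div ((hasDerivAt_log hx₀).pow n) (pow_ne_zero n hlog)).congr_deriv ?_
  cases n with
  | zero => simp
  | succ n =>
    simp only [id, Nat.add_sub_cancel, Pi.pow_apply]
    field_simp
    ring

lemma one_div_log_pow_le {n : ℕ} {x : ℝ} (hx : 1 < x) (hn : 2 * n ≤ log x) :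
    1 / log x ^ n ≤ 2 * (1 / log x ^ n - n / log x ^ (n + 1)) := by
  have hlog : 0 < log x := log_pos hx
  have : 2 * (n / log x ^ (n + 1)) ≤ 1 / log x ^ n := by
    rw [pow_succ, ← mul_div_assoc, div_le_div_iff₀ (by positivity) (by positivity)]
    nlinarith [pow_pos hlog n]
  linarith

lemma intervalIntegrable_one_div_log_pow (n : ℕ) {a b : ℝ} (ha : 1 < a) (hb : 1 < b) :
    IntervalIntegrable (fun t ↦ 1 / log t ^ n) volume a b := by
  have hlog : ∀ u ∈ uIcc a b, u ≠ 0 ∧ log u ≠ 0 := fun u hu ↦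
    have hu₁ : 1 < u := (lt_min ha hb).trans_le hu.1
    ⟨by positivity, (log_pos hu₁).ne'⟩
  refine (continuousOn_const.div ((continuousOn_log.mono fun u hu ↦ (hlog u hu).1).pow n)
    fun u hu ↦ pow_ne_zero n (hlog u hu).2).intervalIntegrable

section Integral

variable {E : Type*} [NormedAddCommGroup E] [NormedSpace ℝ E] {f : ℝ → E} {n : ℕ}

lemma norm_integral_le_of_forall_norm_le_one_div_log_pow {C T t : ℝ} (hC : 0 ≤ C) (hT₁ : 1 < T)
    (hT : 2 * n ≤ log T) (hf : ∀ u > T, ‖f u‖ ≤ C * (1 / log u ^ n)) (ht : T ≤ t) :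
    ‖∫ u in T..t, f u‖ ≤ C * 2 * (t / log t ^ n) := by
  have ht₁ : 1 < t := hT₁.trans_le ht
  have hint : IntervalIntegrable (fun u ↦ 1 / log u ^ n - n / log u ^ (n + 1)) volume T t := by
    simpa only [mul_one_div] using (intervalIntegrable_one_div_log_pow n hT₁ ht₁).sub
      ((intervalIntegrable_one_div_log_pow (n + 1) hT₁ ht₁).const_mul n)
  calc ‖∫ u in T..t, f u‖
      ≤ ∫ u in T..t, C * 2 * (1 / log u ^ n - n / log u ^ (n + 1)) := by
        refine intervalIntegral.norm_integral_le_of_norm_le ht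
          (Eventually.of_forall fun u hu ↦ (hf u hu.1).trans ?_) (hint.const_mul _)
        rw [mul_assoc]
        exact mul_le_mul_of_nonneg_left (one_div_log_pow_le (hT₁.trans hu.1)
          (hT.trans (log_le_log (by linarith) hu.1.le))) hC
    _ = C * 2 * (t / log t ^ n - T / log T ^ n) := by
        rw [intervalIntegral.integral_const_mul, intervalIntegral.integral_eq_sub_of_hasDerivAt
          (fun u hu ↦ hasDerivAt_div_log_pow n ?_) hint]
        exact (lt_min hT₁ ht₁).trans_le hu.1
    _ ≤ C * 2 * (t / log t ^ n) := by
        have := log_pos hT₁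
        gcongr
        exact sub_le_self _ (by positivity)

lemma isBigO_integral_of_isBigO_one_div_log_pow (hfi : ∀ t ≥ 2, IntervalIntegrable f volume 2 t)
    (hf : f =O[atTop] fun t ↦ 1 / log t ^ n) :
    (fun t ↦ ∫ u in (2 : ℝ)..t, f u) =O[atTop] fun t ↦ t / log t ^ n := by
  obtain ⟨C, hC₀, hC⟩ := hf.exists_nonneg
  obtain ⟨T, hT⟩ := eventually_atTop.mp (hC.bound.and
    ((tendsto_log_atTop.eventually_ge_atTop (2 * n)).and (eventually_ge_atTop 2)))
  obtain ⟨-, hlogT, hT₂⟩ := hT T le_rfl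
  have hfT : ∀ u > T, ‖f u‖ ≤ C * (1 / log u ^ n) := fun u hu ↦ by
    have hlog := log_pos (show 1 < u by linarith)
    simpa only [norm_of_nonneg (by positivity : 0 ≤ 1 / log u ^ n)] using (hT u hu.le).1
  have htail : (fun t ↦ ∫ u in T..t, f u) =O[atTop] fun t ↦ t / log t ^ n := by
    refine IsBigO.of_bound (C * 2) ?_
    filter_upwards [eventually_ge_atTop T] with t ht
    exact (norm_integral_le_of_forall_norm_le_one_div_log_pow hC₀ (by linarith) hlogT hfT ht).trans
      (by gcongr; exact le_norm_self _)
  have hinit : (fun _ : ℝ ↦ ∫ u in (2 : ℝ)..T, f u) =O[atTop] fun t ↦ t / log t ^ n :=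
    (isBigO_const_const _ one_ne_zero atTop).trans (isBigO_const_div_log_pow 1 n)
  refine (hinit.add htail).congr' ?_ EventuallyEq.rfl
  filter_upwards [eventually_ge_atTop T] with t ht
  exact intervalIntegral.integral_add_adjacent_intervals (hfi T hT₂)
    ((hfi T hT₂).symm.trans (hfi t (hT₂.trans ht)))

end Integral

end LogPowers

section Summatory

variable {E : Type*}

/-- The summatory function `t ↦ ∑_{1 ≤ k ≤ t} a k` of a sequence, as a function of a real
variable. -/
noncomputable def summatory [AddCommMonoid E] (a : ℕ → E) (t : ℝ) : E :=
  ∑ k ∈ Finset.Icc 1 ⌊t⌋₊, a k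

lemma summatory_of_lt_one [AddCommMonoid E] (a : ℕ → E) {t : ℝ} (ht : t < 1) :
    summatory a t = 0 := by
  simp [summatory, Nat.floor_eq_zero.mpr ht]

lemma summatory_ofReal (a : ℕ → ℝ) (t : ℝ) :
    summatory (fun n ↦ (a n : ℂ)) t = (summatory a t : ℝ) :=
  (Complex.ofReal_sum _ _).symm

lemma locallyIntegrable_comp_floor [NormedAddCommGroup E] (c : ℕ → E) :
    LocallyIntegrable (fun t : ℝ ↦ c ⌊t⌋₊) := by
  refine locallyIntegrable_iff.mpr fun K hK ↦ ?_
  obtain ⟨T, hT⟩ := hK.bddAbove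
  refine Measure.integrableOn_of_bounded (M := ∑ i ∈ Finset.range (⌊T⌋₊ + 1), ‖c i‖)
    hK.measure_lt_top.ne
    (StronglyMeasurable.of_discrete.comp_measurable Nat.measurable_floor).aestronglyMeasurable ?_
  refine ae_restrict_of_forall_mem hK.measurableSet fun t ht ↦ ?_
  exact Finset.single_le_sum (f := fun i ↦ ‖c i‖) (fun _ _ ↦ norm_nonneg _)
    (Finset.mem_range_succ_iff.mpr (Nat.floor_mono (hT ht)))

lemma integral_comp_floor_eq_sum [NormedAddCommGroup E] [NormedSpace ℝ E] [CompleteSpace E]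
    (c : ℕ → E) {m n : ℕ} (hmn : m ≤ n) :
    ∫ t in (m : ℝ)..n, c ⌊t⌋₊ = ∑ k ∈ Finset.Ico m n, c k := by
  have hstep (k : ℕ) : ∫ t in (k : ℝ)..(k + 1 : ℕ), c ⌊t⌋₊ = c k := by
    have hae : ∀ᵐ t : ℝ, t ∈ uIoc (k : ℝ) (k + 1 : ℕ) → c ⌊t⌋₊ = c k := by
      filter_upwards [Measure.ae_ne volume ((k + 1 : ℕ) : ℝ)] with t hne ht
      rw [uIoc_of_le (by simp)] at ht
      rw [(Nat.floor_eq_iff (k.cast_nonneg.trans ht.1.le)).mpr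
        ⟨ht.1.le, by exact_mod_cast ht.2.lt_of_ne hne⟩]
    rw [intervalIntegral.integral_congr_ae hae]
    simp
  rw [← intervalIntegral.sum_integral_adjacent_intervals_Ico (a := fun k : ℕ ↦ (k : ℝ)) hmn
    fun k _ ↦ ((locallyIntegrable_comp_floor c).integrableOn_isCompact
      isCompact_uIcc).intervalIntegrable]
  exact Finset.sum_congr rfl fun k _ ↦ hstep k

lemma locallyIntegrable_summatory [NormedAddCommGroup E] (a : ℕ → E) :
    LocallyIntegrable (summatory a) :=
  locallyIntegrable_comp_floor fun n ↦ ∑ k ∈ Finset.Icc 1 n, a k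

section Mellin

variable {r : ℝ} {s : ℂ}

lemma mellin_summatory {a : ℕ → ℂ} (hr : 0 ≤ r) (hs : r < s.re) (hS : LSeriesSummable a s)
    (hO : summatory a =O[atTop] (· ^ r)) : mellin (summatory a) (-s) = LSeries a s / s := by
  have hs₀ : s ≠ 0 := Complex.ne_zero_of_re_pos (hr.trans_lt hs)
  have hO' : (fun n ↦ ∑ k ∈ Finset.Icc 1 n, a k) =O[atTop] fun n : ℕ ↦ (n : ℝ) ^ r := by
    simpa [Function.comp_def, summatory] using hO.comp_tendsto tendsto_natCast_atTop_atTop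
  rw [LSeries_eq_mul_integral a hr hs hS hO', mul_div_cancel_left₀ _ hs₀, mellin,
    setIntegral_eq_of_subset_of_forall_sdiff_eq_zero measurableSet_Ioi
      (Ici_subset_Ioi.mpr zero_lt_one) fun t ht ↦ ?_, integral_Ici_eq_integral_Ioi]
  · simp only [summatory, smul_eq_mul, neg_add', mul_comm]
  · rw [summatory_of_lt_one a (not_le.mp ht.2), smul_zero]

lemma hasDerivAt_mellin_summatory [NormedAddCommGroup E] [NormedSpace ℂ E] {a : ℕ → E}
    (hO : summatory a =O[atTop] (· ^ r)) (hs : s.re < -r) :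
    MellinConvergent (fun t ↦ log t • summatory a t) s ∧
      HasDerivAt (mellin (summatory a)) (mellin (fun t ↦ log t • summatory a t) s) s := by
  refine mellin_hasDerivAt_of_isBigO_rpow ((locallyIntegrable_summatory a).locallyIntegrableOn _)
    (by simpa using hO) hs (IsBigO.congr' (isBigO_zero _ _) ?_ EventuallyEq.rfl)
    (sub_one_lt s.re)
  filter_upwards [mem_nhdsWithin_of_mem_nhds (gt_mem_nhds zero_lt_one)] with t ht
  exact (summatory_of_lt_one a ht).symm

lemma exists_tendsto_mellin_log_smul_summatory {a : ℕ → ℂ} {G : ℂ → ℂ}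
    (hS : ∀ s : ℂ, 1 < s.re → LSeriesSummable a s) (hG : AnalyticAt ℂ G 1)
    (hLG : ∀ s : ℂ, 1 < s.re → LSeries a s = G s) (hO : summatory a =O[atTop] fun t ↦ t) :
    ∃ L : ℂ, Tendsto (mellin fun t ↦ log t • summatory a t) (𝓝[{s | s.re < -1}] (-1)) (𝓝 L) := by
  set F : ℂ → ℂ := fun s ↦ G (-s) / -s
  have hneg : AnalyticAt ℂ (fun s : ℂ ↦ -s) (-1) := by fun_prop
  have hF : AnalyticAt ℂ F (-1) :=
    (AnalyticAt.fun_comp (by rwa [neg_neg]) hneg).div hneg (by simp)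
  have hO₁ : summatory a =O[atTop] fun t ↦ t ^ (1 : ℝ) := by simpa using hO
  have hmellin : EqOn (mellin (summatory a)) F {s | s.re < -1} := fun s hs ↦ by
    have hs' : 1 < (-s).re := lt_neg_of_lt_neg hs
    rw [← neg_neg s, mellin_summatory zero_le_one hs' (hS _ hs') hO₁, hLG _ hs', neg_neg]
  have hopen : IsOpen {s : ℂ | s.re < -1} := isOpen_lt Complex.continuous_re continuous_const
  refine ⟨deriv F (-1), (hF.deriv.continuousAt.tendsto.mono_left nhdsWithin_le_nhds).congr' ?_⟩
  filter_upwards [self_mem_nhdsWithin] with s hs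
  rw [← (hmellin.eventuallyEq_of_mem (hopen.mem_nhds hs)).deriv_eq,
    (hasDerivAt_mellin_summatory hO₁ hs).2.deriv]

end Mellin

section RealCoefficients

variable {a : ℕ → ℝ}

lemma cpow_smul_log_smul_summatory (a : ℕ → ℝ) (ε : ℝ) {t : ℝ} (ht : 0 < t) :
    (t : ℂ) ^ (((-(1 + ε) : ℝ) : ℂ) - 1) • (log t • summatory (fun n ↦ (a n : ℂ)) t) =
      ((summatory a t * log t / t ^ 2 * t ^ (-ε) : ℝ) : ℂ) := by
  have hexp : ((-(1 + ε) : ℝ) : ℂ) - 1 = ((-ε - 2 : ℝ) : ℂ) := by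
    push_cast
    ring
  rw [summatory_ofReal, hexp, ← Complex.ofReal_cpow ht.le, rpow_sub ht, rpow_two,
    Complex.real_smul, smul_eq_mul]
  push_cast
  ring

lemma integrableOn_summatory_mul_log (hO : summatory a =O[atTop] fun t ↦ t) {ε : ℝ} (hε : 0 < ε) :
    IntegrableOn (fun t ↦ summatory a t * log t / t ^ 2 * t ^ (-ε)) (Ioi 1) := by
  have hO₁ : summatory (fun n ↦ (a n : ℂ)) =O[atTop] fun t ↦ t ^ (1 : ℝ) := by
    simpa [funext (summatory_ofReal a)] using hO
  have hs : ((-(1 + ε) : ℝ) : ℂ).re < -1 := by simpa using hε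
  have hconv := (hasDerivAt_mellin_summatory hO₁ hs).1.mono_set (Ioi_subset_Ioi zero_le_one)
  have hreal := hconv.congr_fun
    (fun t ht ↦ cpow_smul_log_smul_summatory a ε (zero_lt_one.trans ht)) measurableSet_Ioi
  exact hreal.re

lemma mellin_log_smul_summatory_ofReal (a : ℕ → ℝ) (ε : ℝ) :
    mellin (fun t ↦ log t • summatory (fun n ↦ (a n : ℂ)) t) ((-(1 + ε) : ℝ) : ℂ) =
      ((∫ t in Ioi 1, summatory a t * log t / t ^ 2 * t ^ (-ε) : ℝ) : ℂ) := by
  rw [mellin, setIntegral_congr_fun measurableSet_Ioi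
      fun t ht ↦ cpow_smul_log_smul_summatory a ε ht, integral_complex_ofReal,
    ← setIntegral_eq_of_subset_of_forall_sdiff_eq_zero measurableSet_Ioi
      (Ioi_subset_Ioi zero_le_one) fun t ht ↦ ?_]
  rcases (notMem_Ioi.mp ht.2).eq_or_lt with rfl | ht₁
  · simp
  · simp [summatory_of_lt_one a ht₁]

lemma exists_tendsto_integral_summatory_mul_log_mul_rpow_neg {G : ℂ → ℂ}
    (hS : ∀ s : ℂ, 1 < s.re → LSeriesSummable (fun n ↦ (a n : ℂ)) s) (hG : AnalyticAt ℂ G 1)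
    (hLG : ∀ s : ℂ, 1 < s.re → LSeries (fun n ↦ (a n : ℂ)) s = G s)
    (hO : summatory a =O[atTop] fun t ↦ t) :
    ∃ L : ℝ, Tendsto (fun ε : ℝ ↦ ∫ t in Ioi 1, summatory a t * log t / t ^ 2 * t ^ (-ε))
      (𝓝[>] 0) (𝓝 L) := by
  obtain ⟨L, hL⟩ := exists_tendsto_mellin_log_smul_summatory hS hG hLG
    (by simpa [funext (summatory_ofReal a)] using hO)
  have hline : Tendsto (fun ε : ℝ ↦ ((-(1 + ε) : ℝ) : ℂ)) (𝓝[>] 0) (𝓝[{s | s.re < -1}] (-1)) := by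
    refine tendsto_nhdsWithin_iff.mpr ⟨?_, ?_⟩
    · exact (Continuous.tendsto' (by fun_prop) 0 (-1) (by simp)).mono_left nhdsWithin_le_nhds
    · filter_upwards [self_mem_nhdsWithin] with ε hε
      simpa using hε
  refine ⟨L.re, ((Complex.continuous_re.tendsto L).comp (hL.comp hline)).congr fun ε ↦ ?_⟩
  simp only [Function.comp_apply, mellin_log_smul_summatory_ofReal, Complex.ofReal_re]

lemma locallyIntegrableOn_summatory_mul_log (a : ℕ → ℝ) :
    LocallyIntegrableOn (fun t ↦ summatory a t * log t / t ^ 2) (Ici 1) := by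
  have hne : ∀ t ∈ Ici (1 : ℝ), t ≠ 0 := fun t ht ↦ (zero_lt_one.trans_le ht).ne'
  have hcont : ContinuousOn (fun t ↦ log t / t ^ 2) (Ici 1) :=
    (continuousOn_log.mono hne).div (continuousOn_pow 2) fun t ht ↦ pow_ne_zero 2 (hne t ht)
  simpa only [mul_div_assoc] using ((locallyIntegrable_summatory a).locallyIntegrableOn
    _).mul_continuousOn hcont isClosed_Ici.isLocallyClosed

lemma exists_forall_abs_summatory_le (hO : summatory a =O[atTop] fun t ↦ t / log t ^ 2) :
    ∃ C, ∀ t > 1, |summatory a t| ≤ C * (t / log t ^ 2) := by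
  obtain ⟨C, hC⟩ := hO.bound
  obtain ⟨T, hT⟩ := eventually_atTop.mp hC
  set K := ∑ k ∈ Finset.Icc 1 ⌊T⌋₊, |a k|
  refine ⟨max C (K * log T ^ 2), fun t ht ↦ ?_⟩
  have hlog : 0 < log t := log_pos ht
  rcases le_total T t with hTt | hTt
  · have h := hT t hTt
    rw [norm_eq_abs, norm_of_nonneg (by positivity)] at h
    exact h.trans (by gcongr; exact le_max_left _ _)
  · have hK : |summatory a t| ≤ K := (Finset.abs_sum_le_sum_abs _ _).trans
      (Finset.sum_le_sum_of_subset_of_nonneg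
        (Finset.Icc_subset_Icc_right (Nat.floor_mono hTt)) fun _ _ _ ↦ abs_nonneg _)
    calc |summatory a t| ≤ K := hK
      _ = K * log t ^ 2 * (1 / log t ^ 2) := by field_simp
      _ ≤ K * log T ^ 2 * (t / log t ^ 2) := by gcongr
      _ ≤ max C (K * log T ^ 2) * (t / log t ^ 2) := by gcongr; exact le_max_right _ _

theorem exists_tendsto_integral_summatory_mul_log {G : ℂ → ℂ}
    (hS : ∀ s : ℂ, 1 < s.re → LSeriesSummable (fun n ↦ (a n : ℂ)) s) (hG : AnalyticAt ℂ G 1)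
    (hLG : ∀ s : ℂ, 1 < s.re → LSeries (fun n ↦ (a n : ℂ)) s = G s)
    (hO : summatory a =O[atTop] fun t ↦ t / log t ^ 2) :
    ∃ L : ℝ, Tendsto (fun T : ℝ ↦ ∫ t in Ioc 1 T, summatory a t * log t / t ^ 2) atTop (𝓝 L) := by
  have hO₁ : summatory a =O[atTop] fun t ↦ t := by
    simpa using hO.trans (isBigO_div_log_pow_of_le (Nat.zero_le 2))
  obtain ⟨C, hC⟩ := exists_forall_abs_summatory_le hO
  obtain ⟨L, hL⟩ := exists_tendsto_integral_summatory_mul_log_mul_rpow_neg hS hG hLG hO₁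
  refine ⟨L, tendsto_integral_of_tendsto_integral_mul_rpow_neg (C := C)
    (fun ε hε ↦ integrableOn_summatory_mul_log hO₁ hε) (fun t ht ↦ ?_) hL⟩
  have hlog : 0 < log t := log_pos ht
  calc |summatory a t * log t / t ^ 2| = |summatory a t| * (log t / t ^ 2) := by
        rw [mul_div_assoc, abs_mul, abs_of_nonneg (by positivity : 0 ≤ log t / t ^ 2)]
    _ ≤ C * (t / log t ^ 2) * (log t / t ^ 2) := by gcongr; exact hC t ht
    _ = C / (t * log t) := by field_simp

end RealCoefficients

end Summatory

section Zeta

open DirichletCharacter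

lemma exists_analyticAt_neg_logDeriv_sub_riemannZeta :
    ∃ G : ℂ → ℂ, AnalyticAt ℂ G 1 ∧ ∀ s : ℂ, 1 < s.re →
      -deriv riemannZeta s / riemannZeta s - riemannZeta s = G s := by
  set g : ℂ → ℂ := LFunctionTrivChar₁ 1 with hg
  have hg_diff : Differentiable ℂ g := differentiable_LFunctionTrivChar₁ 1
  have hg_one : g 1 = 1 := by simp [hg, LFunctionTrivChar₁]
  have hslope : AnalyticAt ℂ (dslope g 1) 1 :=
    ((Complex.differentiableOn_dslope univ_mem).mpr hg_diff.differentiableOn).analyticAt univ_mem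
  refine ⟨fun s ↦ -deriv g s / g s - dslope g 1 s,
    ((hg_diff.analyticAt 1).deriv.neg.div (hg_diff.analyticAt 1) (by simp [hg_one])).sub hslope,
    fun s hs ↦ ?_⟩
  have hs₁ : s ≠ 1 := by
    rintro rfl
    exact hs.ne' Complex.one_re
  have hs₂ : s - 1 ≠ 0 := sub_ne_zero.mpr hs₁
  have hζ : riemannZeta s ≠ 0 := riemannZeta_ne_zero_of_one_lt_re hs
  have hg_eq : g s = (s - 1) * riemannZeta s := by
    simp [hg, LFunctionTrivChar₁, Function.update_of_ne hs₁, LFunctionTrivChar,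
      LFunction_modOne_eq]
  have hg_deriv : deriv g s = (s - 1) * deriv riemannZeta s + riemannZeta s := by
    rw [hg, deriv_LFunctionTrivChar₁_apply_of_ne_one 1 hs₁, LFunctionTrivChar,
      LFunction_modOne_eq]
  simp only [dslope_of_ne g hs₁, slope_def_field, hg_one, hg_deriv, hg_eq]
  field_simp
  ring

lemma LSeriesSummable_vonMangoldt_sub_one {s : ℂ} (hs : 1 < s.re) :
    LSeriesSummable (fun n ↦ ((Λ n - 1 : ℝ) : ℂ)) s := by
  simpa [Pi.sub_def] using
    (ArithmeticFunction.LSeriesSummable_vonMangoldt hs).sub (LSeriesHasSum_one hs).LSeriesSummable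

lemma LSeries_vonMangoldt_sub_one {s : ℂ} (hs : 1 < s.re) :
    LSeries (fun n ↦ ((Λ n - 1 : ℝ) : ℂ)) s =
      -deriv riemannZeta s / riemannZeta s - riemannZeta s := by
  rw [← ArithmeticFunction.LSeries_vonMangoldt_eq_deriv_riemannZeta_div hs,
    ← LSeries_one_eq_riemannZeta hs,
    ← LSeries_sub (ArithmeticFunction.LSeriesSummable_vonMangoldt hs)
      (LSeriesHasSum_one hs).LSeriesSummable]
  simp [Pi.sub_def]

lemma summatory_vonMangoldt_sub_one (t : ℝ) :
    summatory (fun n ↦ Λ n - 1) t = Chebyshev.psi t - ⌊t⌋₊ := by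
  simp [summatory, Chebyshev.psi, Finset.sum_sub_distrib, ← Finset.Icc_add_one_left_eq_Ioc]

end Zeta

section LogarithmicIntegral

lemma intervalIntegrable_one_div_log {a b : ℝ} (ha : 1 < a) (hb : 1 < b) :
    IntervalIntegrable (fun t ↦ 1 / log t) volume a b := by
  simpa using intervalIntegrable_one_div_log_pow 1 ha hb

lemma hasDerivAt_li {x : ℝ} (hx : 1 < x) : HasDerivAt li (1 / log x) x := by
  have hcont : ContinuousOn (fun t : ℝ ↦ 1 / log t) (Ioi 1) :=
    continuousOn_const.div (continuousOn_log.mono fun t ht ↦ (zero_lt_one.trans ht).ne')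
      fun t ht ↦ (log_pos ht).ne'
  exact intervalIntegral.integral_hasDerivAt_right (intervalIntegrable_one_div_log one_lt_two hx)
    (hcont.stronglyMeasurableAtFilter isOpen_Ioi x hx) (hcont.continuousAt (Ioi_mem_nhds hx))

lemma intervalIntegrable_li_div {t : ℝ} (ht : 2 ≤ t) :
    IntervalIntegrable (fun u ↦ li u / u) volume 2 t := by
  refine ContinuousOn.intervalIntegrable fun u hu ↦ ?_
  have hu₁ : 1 < u := one_lt_two.trans_le ((le_min le_rfl ht).trans hu.1)
  exact ((hasDerivAt_li hu₁).continuousAt.div continuousAt_id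
    (by positivity)).continuousWithinAt

lemma integral_li_div {t : ℝ} (ht : 2 ≤ t) :
    ∫ u in (2 : ℝ)..t, li u / u = li t * log t - (t - 2) := by
  have hone : ∀ u ∈ uIcc 2 t, 1 < u := fun u hu ↦
    one_lt_two.trans_le ((le_min le_rfl ht).trans hu.1)
  have hparts := intervalIntegral.integral_mul_deriv_eq_deriv_mul (v := log) (v' := (·⁻¹))
    (fun u hu ↦ hasDerivAt_li (hone u hu))
    (fun u hu ↦ hasDerivAt_log (zero_lt_one.trans (hone u hu)).ne')
    (intervalIntegrable_one_div_log one_lt_two (one_lt_two.trans_le ht))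
    (intervalIntegral.intervalIntegrable_inv (fun u hu ↦ (zero_lt_one.trans (hone u hu)).ne')
      continuousOn_id)
  have hcancel : ∫ u in (2 : ℝ)..t, 1 / log u * log u = t - 2 := by
    rw [intervalIntegral.integral_congr (g := fun _ ↦ (1 : ℝ)) fun u hu ↦
      one_div_mul_cancel (log_pos (hone u hu)).ne', integral_one]
  have hli_two : li 2 = 0 := intervalIntegral.integral_same
  simpa only [hcancel, hli_two, zero_mul, sub_zero, ← div_eq_mul_inv] using hparts

lemma isBigO_li : li =O[atTop] fun t ↦ t / log t := by
  have h := isBigO_integral_of_isBigO_one_div_log_pow (n := 1)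
    (fun t ht ↦ intervalIntegrable_one_div_log one_lt_two (one_lt_two.trans_le ht))
    (by simpa using isBigO_refl (fun t ↦ 1 / log t) atTop)
  simp only [pow_one] at h
  exact h

lemma isBigO_li_sub_div_log :
    (fun t ↦ li t - t / log t) =O[atTop] fun t ↦ t / log t ^ 2 := by
  have hint : (fun t ↦ ∫ u in (2 : ℝ)..t, li u / u) =O[atTop] fun t ↦ t / log t ^ 1 := by
    refine isBigO_integral_of_isBigO_one_div_log_pow (fun t ht ↦ intervalIntegrable_li_div ht)
      ((isBigO_li.mul (isBigO_refl (·⁻¹) atTop)).congr' EventuallyEq.rfl ?_)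
    filter_upwards [eventually_gt_atTop 1] with t ht
    field_simp
  refine ((hint.sub (isBigO_const_div_log_pow 2 1)).mul
    (isBigO_refl (fun t ↦ (log t)⁻¹) atTop)).congr' ?_ (Eventually.of_forall fun t ↦ by ring)
  filter_upwards [eventually_ge_atTop 2] with t ht
  have := log_pos (one_lt_two.trans_le ht)
  rw [integral_li_div ht]
  field_simp
  ring

lemma isBigO_li_sub_li_floor :
    (fun t ↦ li t - li ⌊t⌋₊) =O[atTop] fun _ ↦ (1 : ℝ) := by
  refine IsBigO.of_bound (1 / log 2) ?_
  filter_upwards [eventually_ge_atTop 2] with t ht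
  have hfloor : (2 : ℝ) ≤ ⌊t⌋₊ := by exact_mod_cast Nat.le_floor (by exact_mod_cast ht)
  have hfloor_le : (⌊t⌋₊ : ℝ) ≤ t := Nat.floor_le (by linarith)
  rw [li, li, intervalIntegral.integral_interval_sub_left
    (intervalIntegrable_one_div_log one_lt_two (by linarith))
    (intervalIntegrable_one_div_log one_lt_two (by linarith))]
  have hlog := log_pos one_lt_two
  calc ‖∫ u in (⌊t⌋₊ : ℝ)..t, 1 / log u‖ ≤ 1 / log 2 * |t - ⌊t⌋₊| := by
        refine intervalIntegral.norm_integral_le_of_norm_le_const fun u hu ↦ ?_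
        rw [uIoc_of_le hfloor_le] at hu
        have hlog_le := log_le_log two_pos (hfloor.trans hu.1.le)
        rw [norm_of_nonneg (one_div_nonneg.mpr (hlog.le.trans hlog_le))]
        gcongr
    _ ≤ 1 / log 2 * ‖(1 : ℝ)‖ := by
        gcongr
        rw [norm_one, abs_of_nonneg (by linarith)]
        linarith [Nat.lt_floor_add_one t]

end LogarithmicIntegral

section PrimeCounting

lemma intervalIntegrable_primePi_div {t : ℝ} (ht : 2 ≤ t) :
    IntervalIntegrable (fun u ↦ primePi u / u) volume 2 t := by
  simp only [div_eq_mul_inv]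
  refine IntervalIntegrable.mul_continuousOn
    ((locallyIntegrable_comp_floor fun n ↦ (n.primeCounting : ℝ)).integrableOn_isCompact
      isCompact_uIcc).intervalIntegrable (continuousOn_inv₀.mono fun u hu ↦ ?_)
  exact (two_pos.trans_le ((le_min le_rfl ht).trans hu.1)).ne'

lemma summatory_vonMangoldt_sub_one_sub_log_mul {t : ℝ} (ht : 2 ≤ t) :
    summatory (fun n ↦ Λ n - 1) t - log t * (primePi t - li t) =
      Chebyshev.psi t - Chebyshev.theta t - (∫ u in (2 : ℝ)..t, (primePi u - li u) / u) +
        (t - ⌊t⌋₊) - 2 := by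
  have htheta : Chebyshev.theta t = primePi t * log t - ∫ u in (2 : ℝ)..t, primePi u / u :=
    Chebyshev.theta_eq_primeCounting_mul_log_sub_integral ht
  simp only [sub_div]
  rw [intervalIntegral.integral_sub (intervalIntegrable_primePi_div ht)
    (intervalIntegrable_li_div ht), integral_li_div ht, summatory_vonMangoldt_sub_one, htheta]
  ring

lemma isBigO_summatory_vonMangoldt_sub_one_sub_log_mul {n : ℕ}
    (h : (fun t ↦ primePi t - li t) =O[atTop] fun t ↦ t / log t ^ n) :
    (fun t ↦ summatory (fun n ↦ Λ n - 1) t - log t * (primePi t - li t)) =O[atTop]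
      fun t ↦ t / log t ^ n := by
  have hpsi : (fun t ↦ Chebyshev.psi t - Chebyshev.theta t) =O[atTop] fun t ↦ t / log t ^ n := by
    refine Chebyshev.isBigO_psi_sub_theta_sqrt.trans ?_
    rw [funext sqrt_eq_rpow]
    exact isBigO_rpow_div_log_pow one_half_lt_one n
  have hint : (fun t ↦ ∫ u in (2 : ℝ)..t, (primePi u - li u) / u) =O[atTop]
      fun t ↦ t / log t ^ n := by
    refine isBigO_integral_of_isBigO_one_div_log_pow (fun t ht ↦ ?_)
      ((h.mul (isBigO_refl (·⁻¹) atTop)).congr' EventuallyEq.rfl ?_)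
    · simpa only [sub_div] using
        (intervalIntegrable_primePi_div ht).sub (intervalIntegrable_li_div ht)
    · filter_upwards [eventually_gt_atTop 1] with t ht
      field_simp
  have hfloor : (fun t : ℝ ↦ t - ⌊t⌋₊) =O[atTop] fun t ↦ t / log t ^ n := by
    refine IsBigO.trans (IsBigO.of_bound' ?_) (isBigO_const_div_log_pow 1 n)
    filter_upwards [eventually_ge_atTop 0] with t ht
    rw [norm_of_nonneg (sub_nonneg.mpr (Nat.floor_le ht)), norm_one]
    linarith [Nat.lt_floor_add_one t]
  refine (((hpsi.sub hint).add hfloor).sub (isBigO_const_div_log_pow 2 n)).congr' ?_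
    EventuallyEq.rfl
  filter_upwards [eventually_ge_atTop 2] with t ht
  exact (summatory_vonMangoldt_sub_one_sub_log_mul ht).symm

lemma isBigO_summatory_vonMangoldt_sub_one {n : ℕ}
    (h : (fun t ↦ primePi t - li t) =O[atTop] fun t ↦ t / log t ^ (n + 1)) :
    summatory (fun n ↦ Λ n - 1) =O[atTop] fun t ↦ t / log t ^ n := by
  have hlog : (fun t ↦ log t * (primePi t - li t)) =O[atTop] fun t ↦ t / log t ^ n := by
    refine ((isBigO_refl log atTop).mul h).congr' EventuallyEq.rfl ?_
    filter_upwards [eventually_gt_atTop 1] with t ht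
    have := log_pos ht
    field_simp
    ring
  exact (((isBigO_summatory_vonMangoldt_sub_one_sub_log_mul h).trans
    (isBigO_div_log_pow_of_le n.le_succ)).add hlog).congr_left fun t ↦ by ring

theorem exists_tendsto_integral_summatory_vonMangoldt_sub_one_mul_log
    (h : (fun t ↦ primePi t - li t) =O[atTop] fun t ↦ t / log t ^ 3) :
    ∃ L : ℝ, Tendsto (fun T : ℝ ↦ ∫ t in Ioc 1 T, summatory (fun n ↦ Λ n - 1) t * log t / t ^ 2)
      atTop (𝓝 L) := by
  obtain ⟨G, hG, hζ⟩ := exists_analyticAt_neg_logDeriv_sub_riemannZeta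
  exact exists_tendsto_integral_summatory_mul_log
    (fun s hs ↦ LSeriesSummable_vonMangoldt_sub_one hs) hG
    (fun s hs ↦ (LSeries_vonMangoldt_sub_one hs).trans (hζ s hs))
    (isBigO_summatory_vonMangoldt_sub_one (n := 2) h)

end PrimeCounting

section Reciprocals

lemma isBigO_inv_sub_inv_add {ι 𝕜 : Type*} [NormedField 𝕜] {l : Filter ι} {u v w d e : ι → 𝕜}
    (hu : (u - w) =O[l] e) (hv : (v - w) =O[l] e) (he : e =o[l] w) (huv : (u - v) =O[l] d) :
    (fun i ↦ (u i)⁻¹ - (v i)⁻¹ + (u i - v i) / w i ^ 2) =O[l] fun i ↦ d i * e i / w i ^ 3 := by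
  have hu_equiv : u ~[l] w := hu.trans_isLittleO he
  have hv_equiv : v ~[l] w := hv.trans_isLittleO he
  have hnum : (fun i ↦ u i * (v i - w i) + w i * (u i - w i)) =O[l] fun i ↦ w i * e i :=
    (hu_equiv.isBigO.mul hv).add ((isBigO_refl w l).mul hu)
  have hden : (fun i ↦ (u i)⁻¹ * (v i)⁻¹ * (w i ^ 2)⁻¹) =O[l]
      fun i ↦ (w i)⁻¹ * (w i)⁻¹ * (w i ^ 2)⁻¹ :=
    (hu_equiv.inv.isBigO.mul hv_equiv.inv.isBigO).mul (isBigO_refl _ l)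
  refine ((huv.mul hnum).mul hden).congr' ?_ ?_
  · filter_upwards [hu_equiv.isBigO.eq_zero_imp, hu_equiv.isBigO_symm.eq_zero_imp,
      hv_equiv.isBigO.eq_zero_imp, hv_equiv.isBigO_symm.eq_zero_imp] with i hu₀ huw hv₀ hvw
    by_cases hw : w i = 0
    · simp [hw, hu₀ hw, hv₀ hw]
    have hu_ne : u i ≠ 0 := mt huw hw
    have hv_ne : v i ≠ 0 := mt hvw hw
    simp only [Pi.sub_apply]
    field_simp
    ring
  · refine Eventually.of_forall fun i ↦ ?_
    by_cases hw : w i = 0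
    · simp [hw]
    field_simp

lemma isLittleO_div_log_sq_div_log :
    (fun t : ℝ ↦ t / log t ^ 2) =o[atTop] fun t ↦ t / log t := by
  have hinv : (fun t : ℝ ↦ (log t)⁻¹) =o[atTop] fun _ ↦ (1 : ℝ) :=
    (isLittleO_one_iff ℝ).mpr tendsto_log_atTop.inv_tendsto_atTop
  exact ((isBigO_refl (fun t : ℝ ↦ t / log t) atTop).mul_isLittleO hinv).congr
    (fun t ↦ by ring) fun t ↦ mul_one _

lemma isBigO_one_div_primePi_sub_one_div_li_floor_add
    (h : (fun t ↦ primePi t - li t) =O[atTop] fun t ↦ t / log t ^ 3) :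
    (fun t ↦ 1 / primePi t - 1 / li ⌊t⌋₊ + summatory (fun n ↦ Λ n - 1) t * log t / t ^ 2)
      =O[atTop] fun t ↦ 1 / (t * log t ^ 2) := by
  have hfloor (n : ℕ) : (fun t ↦ li t - li ⌊t⌋₊) =O[atTop] fun t ↦ t / log t ^ n :=
    isBigO_li_sub_li_floor.trans (isBigO_const_div_log_pow 1 n)
  have hdiff : (fun t ↦ primePi t - li ⌊t⌋₊) =O[atTop] fun t ↦ t / log t ^ 3 :=
    (h.add (hfloor 3)).congr_left fun t ↦ by ring
  have hli : (fun t : ℝ ↦ li ⌊t⌋₊ - t / log t) =O[atTop] fun t ↦ t / log t ^ 2 :=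
    (isBigO_li_sub_div_log.sub (hfloor 2)).congr_left fun t ↦ by ring
  have hpi : (fun t ↦ primePi t - t / log t) =O[atTop] fun t ↦ t / log t ^ 2 :=
    (hli.add (hdiff.trans (isBigO_div_log_pow_of_le (Nat.le_succ 2)))).congr_left fun t ↦ by ring
  have hrecip := isBigO_inv_sub_inv_add hpi hli isLittleO_div_log_sq_div_log hdiff
  have hlog : (fun t ↦ log t * (li t - li ⌊t⌋₊)) =O[atTop] fun t ↦ t / log t ^ 3 := by
    refine ((isBigO_refl log atTop).mul (hfloor 4)).congr' EventuallyEq.rfl ?_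
    filter_upwards [eventually_gt_atTop 1] with t ht
    have := log_pos ht
    field_simp
  have hsum := ((isBigO_summatory_vonMangoldt_sub_one_sub_log_mul h).sub hlog).mul
    (isBigO_refl (fun t ↦ log t / t ^ 2) atTop)
  refine ((hrecip.trans_eventuallyEq ?_).add (hsum.trans_eventuallyEq ?_)).congr' ?_
    EventuallyEq.rfl
  all_goals
    filter_upwards [eventually_gt_atTop 1] with t ht
    have := log_pos ht
  · field_simp
  · field_simp
  · simp only [one_div]
    field_simp
    ring

lemma integrableAtFilter_one_div_mul_log_sq :
    IntegrableAtFilter (fun t : ℝ ↦ 1 / (t * log t ^ 2)) atTop := by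
  have hpos : ∀ t ∈ Ici (2 : ℝ), 0 < t ∧ 0 < log t := fun t ht ↦
    ⟨two_pos.trans_le ht, log_pos (one_lt_two.trans_le ht)⟩
  have hderiv : ∀ t ∈ Ici (2 : ℝ), HasDerivAt (fun t ↦ -(log t)⁻¹) (1 / (t * log t ^ 2)) t :=
    fun t ht ↦ by
      obtain ⟨ht₀, hlog⟩ := hpos t ht
      refine ((hasDerivAt_log ht₀.ne').fun_inv hlog.ne').neg.congr_deriv ?_
      field_simp
  refine ⟨Ioi 2, Ioi_mem_atTop 2, integrableOn_Ioi_deriv_of_nonneg' (l := -0) hderiv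
    (fun t ht ↦ ?_) tendsto_log_atTop.inv_tendsto_atTop.neg⟩
  obtain ⟨ht₀, hlog⟩ := hpos t (Ioi_subset_Ici_self ht)
  positivity

lemma locallyIntegrableOn_one_div_primePi_sub_one_div_li_floor :
    LocallyIntegrableOn (fun t : ℝ ↦ 1 / primePi t - 1 / li ⌊t⌋₊) (Ici 1) :=
  (locallyIntegrable_comp_floor fun n ↦ 1 / (n.primeCounting : ℝ) - 1 / li n).locallyIntegrableOn _

theorem exists_tendsto_integral_one_div_primePi_sub_one_div_li
    (h : (fun t ↦ primePi t - li t) =O[atTop] fun t ↦ t / log t ^ 3) :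
    ∃ L : ℝ, Tendsto (fun T : ℝ ↦ ∫ t in (3 : ℝ)..T, (1 / primePi t - 1 / li ⌊t⌋₊))
      atTop (𝓝 L) := by
  set D : ℝ → ℝ := fun t ↦ 1 / primePi t - 1 / li ⌊t⌋₊
  set S : ℝ → ℝ := fun t ↦ summatory (fun n ↦ Λ n - 1) t * log t / t ^ 2
  have hD : LocallyIntegrableOn D (Ici 1) :=
    locallyIntegrableOn_one_div_primePi_sub_one_div_li_floor
  have hS : LocallyIntegrableOn S (Ici 1) := locallyIntegrableOn_summatory_mul_log _
  have hinterval {f : ℝ → ℝ} (hf : LocallyIntegrableOn f (Ici 1)) {a b : ℝ} (ha : 1 ≤ a)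
      (hb : 1 ≤ b) : IntervalIntegrable f volume a b :=
    (hf.integrableOn_compact_subset (fun x hx ↦ (le_min ha hb).trans hx.1)
      isCompact_uIcc).intervalIntegrable
  have hsum : IntegrableOn (fun t ↦ D t + S t) (Ici 1) :=
    (hD.add hS).integrableOn_of_isBigO_atTop (isBigO_one_div_primePi_sub_one_div_li_floor_add h)
      integrableAtFilter_one_div_mul_log_sq
  obtain ⟨L, hL⟩ := exists_tendsto_integral_summatory_vonMangoldt_sub_one_mul_log h
  have hsum_lim := intervalIntegral_tendsto_integral_Ioi 1
    (hsum.mono_set Ioi_subset_Ici_self) tendsto_id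
  refine ⟨_, ((hsum_lim.sub hL).sub_const (∫ t in (1 : ℝ)..3, D t)).congr' ?_⟩
  filter_upwards [eventually_ge_atTop 1] with T hT
  have hthree : (1 : ℝ) ≤ 3 := by norm_num
  have h1T := intervalIntegral.integral_add (hinterval hD le_rfl hT) (hinterval hS le_rfl hT)
  have h3T := intervalIntegral.integral_add_adjacent_intervals
    (hinterval hD le_rfl hthree) (hinterval hD hthree hT)
  rw [← intervalIntegral.integral_of_le hT, id, h1T]
  linarith

end Reciprocals

theorem difference_converges
    (hR : (fun x : ℝ => primePi x - li x)
      =O[atTop] (fun x : ℝ => x / (Real.log x) ^ 3)) :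
    ∃ L : ℝ, Filter.Tendsto
      (fun x : ℝ => (∑ n ∈ Finset.Icc 2 ⌊x⌋₊, 1 / (Nat.primeCounting n : ℝ)) -
        ∑ n ∈ Finset.Icc 3 ⌊x⌋₊, 1 / li n)
      atTop (nhds L) := by
  obtain ⟨L, hL⟩ := exists_tendsto_integral_one_div_primePi_sub_one_div_li hR
  have hfloor : Tendsto (fun x : ℝ ↦ ((⌊x⌋₊ + 1 : ℕ) : ℝ)) atTop atTop :=
    tendsto_natCast_atTop_atTop.comp ((tendsto_add_atTop_nat 1).comp tendsto_nat_floor_atTop)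
  refine ⟨_, ((hL.comp hfloor).const_add (1 / (Nat.primeCounting 2 : ℝ))).congr' ?_⟩
  filter_upwards [eventually_ge_atTop 2] with x hx
  have hn : 2 ≤ ⌊x⌋₊ := Nat.le_floor (by exact_mod_cast hx)
  have hsum := integral_comp_floor_eq_sum (fun n ↦ 1 / (n.primeCounting : ℝ) - 1 / li n)
    (show 3 ≤ ⌊x⌋₊ + 1 by lia)
  have htwo : ∑ n ∈ Finset.Icc 2 ⌊x⌋₊, 1 / (Nat.primeCounting n : ℝ) =
      1 / (Nat.primeCounting 2 : ℝ) +
        ∑ n ∈ Finset.Ico 3 (⌊x⌋₊ + 1), 1 / (Nat.primeCounting n : ℝ) :=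
    Finset.sum_eq_sum_Ico_succ_bot (by lia) _
  rw [Finset.sum_sub_distrib] at hsum
  rw [htwo, add_sub_assoc]
  exact congrArg _ hsum
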